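/- Let G be a discrete torsion-free abelian group and let G_j (1 ≤ j ≤ J) be discrete abelian groups, all equipped with counting measure. Let σ_j : G → G_j be surjective group homomorphisms with ⋂_{j=1}^J ker(σ_j) = {0}, and let p_j ∈ [1,∞]. For a finitely generated abelian group A, let γ(A) denote its torsion-free rank, i.e. the dimension of the ℚ-vector space ℚ ⊗_ℤ A. If for every finitely generated subgroup H of G one has γ(H) ≤ Σ_{j=1}^J γ(σ_j(H))/p_j, then the optimal Brascamp–Lieb constant BL(G, σ, p) equals 1; if this rank condition fails for some finitely generated subgroup H of G, then BL(G, σ, p) = ∞, i.e. the Brascamp–Lieb inequality holds for no finite constant. -/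

import Mathlib

open MeasureTheory ENNReal TensorProduct

/-- The discrete Brascamp–Lieb inequality (with counting measures) holds with constant `C`,
for finitely supported real inputs. -/
def HoldsBLCount {ι : Type*} [Fintype ι] {G : Type*} [AddCommGroup G] [MeasurableSpace G]
    {Gj : ι → Type*} [∀ j, AddCommGroup (Gj j)] [∀ j, MeasurableSpace (Gj j)]
    (σ : ∀ j, G →+ Gj j) (p : ι → ℝ≥0∞) (C : ℝ≥0∞) : Prop :=
  ∀ f : ∀ j, Gj j → ℝ, (∀ j, (Function.support (f j)).Finite) →
    Integrable (fun x => ∏ j, f j (σ j x)) (Measure.count : Measure G) →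
    ENNReal.ofReal |∫ x, ∏ j, f j (σ j x) ∂(Measure.count : Measure G)|
      ≤ C * ∏ j, eLpNorm (f j) (p j) (Measure.count : Measure (Gj j))

/-- The optimal discrete Brascamp–Lieb constant (with counting measures). -/
noncomputable def blConstCount {ι : Type*} [Fintype ι] {G : Type*} [AddCommGroup G]
    [MeasurableSpace G]
    {Gj : ι → Type*} [∀ j, AddCommGroup (Gj j)] [∀ j, MeasurableSpace (Gj j)]
    (σ : ∀ j, G →+ Gj j) (p : ι → ℝ≥0∞) : ℝ≥0∞ :=
  sInf {C | HoldsBLCount σ p C}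

/-!
With `s j = 1 / p j` and `f j = g j ^ s j`, the bound by `1` becomes
`∑ x, ∏ j, g j (σ j x) ^ s j ≤ ∏ j, (∑ y, g j y) ^ s j`, and it suffices to sum over a finitely
generated subgroup `V`. By Hölder's inequality the `s` for which this holds form a convex set, and
as only finitely many ranks occur, the rank condition cuts out a compact polytope in `[0, 1]^ι`.
Proceed by induction on the rank of `V`.

* If a subgroup `W` of intermediate rank is critical, meaning that the rank condition is an equality
  there, enlarge it without changing its rank so that `V ⧸ W` is torsion-free. Both `W` and `V ⧸ W`
  inherit the rank condition, and summing over the cosets of `W` combines their two inequalities.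
* If two coordinates of `s` lie strictly between `0` and `1`, then `s` lies on a segment in the
  polytope along which both sides of the rank condition for `V` itself are constant. It can be
  prolonged in both directions until a critical subgroup appears or a coordinate becomes `0` or `1`.
* If at most one coordinate is fractional, the rank condition for the common kernel of the maps with
  `s j = 1` forces it to vanish, and the inequality is trivial for an injection into a product.

Conversely, the indicator of `{0}` shows that every admissible constant is at least `1`. Indicators
of the images of cubes of side `N` in a free subgroup of full rank in `H` show, as `N → ∞`, that a
finite constant forces the rank condition for `H`.
-/

namespace BrascampLieb

open Filter Module Set Topology

section SumBound

variable {ι : Type*} [Fintype ι]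

/-- The Brascamp–Lieb inequality with constant `1` for sums over the set `V`, in the form obtained
from the usual one with exponents `p j = 1 / s j` by inserting `f j = g j ^ s j`. -/
def SumBound {V : Type*} {E : ι → Type*} (L : ∀ j, V → E j) (s : ι → ℝ) : Prop :=
  ∀ g : ∀ j, E j → ℝ≥0∞, ∑' x, ∏ j, g j (L j x) ^ s j ≤ ∏ j, (∑' y, g j y) ^ s j

lemma tsum_prod_le_prod_tsum {V : Type*} {E : ι → Type*} (L : ∀ j, V → E j)
    (hL : Function.Injective fun x j => L j x) (g : ∀ j, E j → ℝ≥0∞) :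
    ∑' x, ∏ j, g j (L j x) ≤ ∏ j, ∑' y, g j y := by
  classical
  rw [ENNReal.tsum_eq_iSup_sum]
  refine iSup_le fun T => ?_
  calc ∑ x ∈ T, ∏ j, g j (L j x)
      = ∑ y ∈ T.image (fun x j => L j x), ∏ j, g j (y j) := by
        rw [Finset.sum_image fun _ _ _ _ h => hL h]
    _ ≤ ∑ y ∈ Fintype.piFinset fun j => T.image (L j), ∏ j, g j (y j) := by
        refine Finset.sum_le_sum_of_subset (Finset.image_subset_iff.2 fun x hx => ?_)
        exact Fintype.mem_piFinset.2 fun j => Finset.mem_image_of_mem _ hx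
    _ = ∏ j, ∑ y ∈ T.image (L j), g j y := (Finset.prod_univ_sum _ _).symm
    _ ≤ ∏ j, ∑' y, g j y := Finset.prod_le_prod' fun j _ => ENNReal.sum_le_tsum _

lemma SumBound.of_injective {V : Type*} {E : ι → Type*} {L : ∀ j, V → E j} {s : ι → ℝ}
    (hs : 0 ≤ s) (hL : Function.Injective fun x (j : {j // s j = 1}) => L j x) :
    SumBound L s := by
  classical
  intro g
  have hsplit (a : ι → ℝ≥0∞) :
      ∏ j, a j ^ s j = (∏ j : {j // s j = 1}, a j) * ∏ j : {j // ¬ s j = 1}, a j ^ s j := by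
    rw [← Fintype.prod_subtype_mul_prod_subtype (fun j => s j = 1)]
    congr 1
    exact Finset.prod_congr rfl fun j _ => by rw [j.2, ENNReal.rpow_one]
  calc ∑' x, ∏ j, g j (L j x) ^ s j
      ≤ ∑' x, (∏ j : {j // s j = 1}, g j (L j x)) *
          ∏ j : {j // ¬ s j = 1}, (∑' y, g j y) ^ s j := by
        refine ENNReal.tsum_le_tsum fun x => ?_
        rw [hsplit]
        gcongr with j
        · exact hs j
        · exact ENNReal.le_tsum _
    _ ≤ (∏ j : {j // s j = 1}, ∑' y, g j y) *
          ∏ j : {j // ¬ s j = 1}, (∑' y, g j y) ^ s j := by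
        rw [ENNReal.tsum_mul_right]
        gcongr
        exact tsum_prod_le_prod_tsum (fun j : {j // s j = 1} => L j) hL fun j => g j
    _ = ∏ j, (∑' y, g j y) ^ s j := (hsplit fun j => ∑' y, g j y).symm

lemma tsum_rpow_mul_rpow_le {α : Type*} (f g : α → ℝ≥0∞) {a b : ℝ} (ha : 0 ≤ a) (hb : 0 ≤ b)
    (hab : a + b = 1) : ∑' x, f x ^ a * g x ^ b ≤ (∑' x, f x) ^ a * (∑' x, g x) ^ b := by
  let _ : MeasurableSpace α := ⊤
  simpa only [lintegral_count] using ENNReal.lintegral_mul_norm_pow_le (μ := Measure.count)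
    (measurable_from_top (f := f)).aemeasurable (measurable_from_top (f := g)).aemeasurable
    ha hb hab

lemma convex_setOf_sumBound {V : Type*} {E : ι → Type*} (L : ∀ j, V → E j) :
    Convex ℝ {s : ι → ℝ | 0 ≤ s ∧ SumBound L s} := by
  rintro s ⟨hs, hLs⟩ s' ⟨hs', hLs'⟩ a b ha hb hab
  refine ⟨add_nonneg (smul_nonneg ha hs) (smul_nonneg hb hs'), fun g => ?_⟩
  have hsplit (c : ι → ℝ≥0∞) :
      ∏ j, c j ^ (a • s + b • s') j = (∏ j, c j ^ s j) ^ a * (∏ j, c j ^ s' j) ^ b := by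
    rw [← ENNReal.prod_rpow_of_nonneg ha, ← ENNReal.prod_rpow_of_nonneg hb,
      ← Finset.prod_mul_distrib]
    refine Finset.prod_congr rfl fun j _ => ?_
    rw [← ENNReal.rpow_mul, ← ENNReal.rpow_mul, mul_comm _ a, mul_comm _ b]
    exact ENNReal.rpow_add_of_nonneg _ _ (mul_nonneg ha (hs j)) (mul_nonneg hb (hs' j))
  simp only [hsplit]
  calc _ ≤ _ := tsum_rpow_mul_rpow_le _ _ ha hb hab
    _ ≤ _ := by
      gcongr
      exacts [hLs g, hLs' g]

variable {R V : Type*} [Ring R] [AddCommGroup V] [Module R V]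
  {E : ι → Type*} [∀ j, AddCommGroup (E j)] [∀ j, Module R (E j)]

lemma SumBound.of_forall_fg {L : ∀ j, V →ₗ[R] E j} {s : ι → ℝ} (hs : 0 ≤ s)
    (h : ∀ W : Submodule R V, W.FG → SumBound (fun j => (L j).submoduleMap W) s) :
    SumBound (fun j => L j) s := by
  intro g
  rw [ENNReal.tsum_eq_iSup_sum]
  refine iSup_le fun T => ?_
  let W := Submodule.span R (T : Set V)
  let inclusion (x : T) : W := ⟨x, Submodule.subset_span x.2⟩
  have inclusion_injective : Function.Injective inclusion := fun x y hxy =>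
    Subtype.ext (congrArg (fun w : W => (w : V)) hxy)
  calc ∑ x ∈ T, ∏ j, g j (L j x) ^ s j
      = ∑' x : T, ∏ j, g j (L j (inclusion x)) ^ s j := (Finset.tsum_subtype T _).symm
    _ ≤ ∑' w : W, ∏ j, g j (L j w) ^ s j :=
        ENNReal.tsum_comp_le_tsum_of_injective inclusion_injective
          fun w : W => ∏ j, g j (L j w) ^ s j
    _ ≤ ∏ j, (∑' y : W.map (L j), g j y) ^ s j :=
        h W (Submodule.fg_span T.finite_toSet) fun j y => g j y
    _ ≤ ∏ j, (∑' y, g j y) ^ s j := by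
        gcongr with j
        · exact hs j
        · exact ENNReal.tsum_comp_le_tsum_of_injective Subtype.val_injective (g j)

lemma tsum_fiber_mkQ (W : Submodule R V) (F : V → ℝ≥0∞) (x : V) :
    ∑' a : W.mkQ ⁻¹' {W.mkQ x}, F a = ∑' w : W, F (x + w) := by
  let e : W ≃ W.mkQ ⁻¹' {W.mkQ x} :=
    { toFun w := ⟨x + w, by simp⟩
      invFun a := ⟨a - x, by simpa [Submodule.Quotient.eq] using a.2⟩
      left_inv w := by simp
      right_inv a := Subtype.ext (by simp) }
  exact (e.tsum_eq fun a => F a).symm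

/-- The maps `V ⧸ W → E j ⧸ L j W` induced by the maps `L j` and a submodule `W`. -/
def quotientMap (L : ∀ j, V →ₗ[R] E j) (W : Submodule R V) (j : ι) :
    V ⧸ W →ₗ[R] E j ⧸ W.map (L j) :=
  W.mapQ (W.map (L j)) (L j) (W.le_comap_map (L j))

lemma SumBound.of_submodule_of_quotient {L : ∀ j, V →ₗ[R] E j} {s : ι → ℝ} {W : Submodule R V}
    (hW : SumBound (fun j => (L j).submoduleMap W) s)
    (hQ : SumBound (fun j => quotientMap L W j) s) : SumBound (fun j => L j) s := by
  intro g
  let fiberSum (j : ι) (q : E j ⧸ W.map (L j)) : ℝ≥0∞ :=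
    ∑' y : (W.map (L j)).mkQ ⁻¹' {q}, g j y
  have hfiber (x : V) : ∑' a : W.mkQ ⁻¹' {W.mkQ x}, ∏ j, g j (L j a) ^ s j
      ≤ ∏ j, fiberSum j (quotientMap L W j (W.mkQ x)) ^ s j := by
    rw [tsum_fiber_mkQ W fun a => ∏ j, g j (L j a) ^ s j]
    calc ∑' w : W, ∏ j, g j (L j (x + w)) ^ s j
        = ∑' w : W, ∏ j, g j (L j x + (L j).submoduleMap W w) ^ s j := by simp
      _ ≤ ∏ j, (∑' y : W.map (L j), g j (L j x + y)) ^ s j :=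
          hW fun j y => g j (L j x + y)
      _ = ∏ j, fiberSum j ((W.map (L j)).mkQ (L j x)) ^ s j := by
          simp only [fiberSum, tsum_fiber_mkQ]
  calc ∑' x, ∏ j, g j (L j x) ^ s j
      = ∑' c, ∑' a : W.mkQ ⁻¹' {c}, ∏ j, g j (L j a) ^ s j :=
        (ENNReal.tsum_fiberwise _ W.mkQ).symm
    _ ≤ ∑' c, ∏ j, fiberSum j (quotientMap L W j c) ^ s j :=
        ENNReal.tsum_le_tsum (W.mkQ_surjective.forall.2 hfiber)
    _ ≤ ∏ j, (∑' q, fiberSum j q) ^ s j := hQ fiberSum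
    _ = ∏ j, (∑' y, g j y) ^ s j := by simp only [fiberSum, ENNReal.tsum_fiberwise]

end SumBound

section Rank

variable {R : Type*} [CommRing R] [IsDomain R] {M N : Type*} [AddCommGroup M] [Module R M]
  [AddCommGroup N] [Module R N]

lemma finrank_map_add_finrank_inf_ker (f : M →ₗ[R] N) (A : Submodule R M) [Module.Finite R A] :
    finrank R (A.map f) + finrank R ↥(A ⊓ LinearMap.ker f) = finrank R A := by
  have hker : A ⊓ LinearMap.ker f = (LinearMap.ker (f.domRestrict A)).map A.subtype := by
    rw [LinearMap.ker_domRestrict, Submodule.map_comap_subtype]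
  rw [hker, Submodule.finrank_map_subtype_eq, ← LinearMap.range_domRestrict,
    ← (f.domRestrict A).quotKerEquivRange.finrank_eq, Submodule.finrank_quotient_add_finrank]

lemma finrank_map_mkQ_add_finrank {A B : Submodule R M} [Module.Finite R A] (hBA : B ≤ A) :
    finrank R (A.map B.mkQ) + finrank R B = finrank R A := by
  rw [← finrank_map_add_finrank_inf_ker B.mkQ A, Submodule.ker_mkQ, inf_eq_right.2 hBA]

lemma finrank_map_eq_of_le_of_finrank_eq [IsNoetherian R M] (f : M →ₗ[R] N) {A B : Submodule R M}
    (hAB : A ≤ B) (h : finrank R A = finrank R B) : finrank R (A.map f) = finrank R (B.map f) := by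
  have hA := finrank_map_add_finrank_inf_ker f A
  have hB := finrank_map_add_finrank_inf_ker f B
  have hmap : finrank R (A.map f) ≤ finrank R (B.map f) :=
    Submodule.finrank_mono (Submodule.map_mono hAB)
  have hker : finrank R ↥(A ⊓ LinearMap.ker f) ≤ finrank R ↥(B ⊓ LinearMap.ker f) :=
    Submodule.finrank_mono (inf_le_inf_right _ hAB)
  omega

lemma exists_le_finrank_eq_isTorsionFree_quotient [IsNoetherian R M] (W : Submodule R M) :
    ∃ W' ≥ W, finrank R W' = finrank R W ∧ IsTorsionFree R (M ⧸ W') := by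
  let W' := (Submodule.torsion R (M ⧸ W)).comap W.mkQ
  have hW' : W'.map W.mkQ = Submodule.torsion R (M ⧸ W) :=
    Submodule.map_comap_eq_of_surjective W.mkQ_surjective _
  have hle : W ≤ W' := W.le_comap_mkQ _
  refine ⟨W', hle, ?_, ?_⟩
  · rw [← finrank_map_mkQ_add_finrank hle, hW', Nat.add_eq_right,
      finrank_eq_zero_iff_isTorsion]
    exact Submodule.torsion_isTorsion
  · let e : (M ⧸ W') ≃ₗ[R] (M ⧸ W) ⧸ Submodule.torsion R (M ⧸ W) :=
      (Submodule.quotientQuotientEquivQuotient W W' hle).symm ≪≫ₗ Submodule.quotEquivOfEq _ _ hW'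
    exact e.injective.moduleIsTorsionFree e fun r x => e.map_smul r x

lemma finite_range_finrank_map {ι : Type*} [Finite ι] {E : ι → Type*} [∀ j, AddCommGroup (E j)]
    [∀ j, Module R (E j)] [IsNoetherian R M] (L : ∀ j, M →ₗ[R] E j) :
    (range fun W : Submodule R M => (finrank R W, fun j => finrank R (W.map (L j)))).Finite := by
  have := Fintype.ofFinite ι
  classical
  refine (finite_Iic ((finrank R M, fun _ => finrank R M) : ℕ × (ι → ℕ))).subset ?_
  rintro _ ⟨W, rfl⟩
  exact ⟨W.finrank_le, fun j => (Submodule.finrank_map_le (L j) W).trans W.finrank_le⟩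

end Rank

section RankPolytope

variable {ι : Type*} [Fintype ι] {R V : Type*} [CommRing R] [AddCommGroup V] [Module R V]
  {E : ι → Type*} [∀ j, AddCommGroup (E j)] [∀ j, Module R (E j)]

/-- The rank condition on a Brascamp–Lieb datum of linear maps with exponents `p j = 1 / s j`. -/
def RankCondition (L : ∀ j, V →ₗ[R] E j) (s : ι → ℝ) : Prop :=
  ∀ W : Submodule R V, W.FG → (finrank R W : ℝ) ≤ ∑ j, s j * finrank R (W.map (L j))

/-- The Brascamp–Lieb polytope of a family of linear maps: the reciprocal exponents `s j = 1 / p j`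
in `[0, 1]` that satisfy the rank condition. -/
def rankPolytope (L : ∀ j, V →ₗ[R] E j) : Set (ι → ℝ) :=
  Icc 0 1 ∩ {s | RankCondition L s}

/-- A submodule of intermediate rank at which the rank condition is an equality. It splits the
datum into two data of smaller rank that satisfy the rank condition again. -/
def IsCritical (L : ∀ j, V →ₗ[R] E j) (s : ι → ℝ) (W : Submodule R V) : Prop :=
  0 < finrank R W ∧ finrank R W < finrank R V ∧
    (finrank R W : ℝ) = ∑ j, s j * finrank R (W.map (L j))

/-- The indices of the coordinates of `s` lying strictly between `0` and `1`, that is, of those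
which can be perturbed in both directions within the cube `[0, 1]^ι`. -/
noncomputable def fractionalIndices (s : ι → ℝ) : Finset ι :=
  {j | s j ∈ Ioo 0 1}

lemma mem_fractionalIndices {s : ι → ℝ} {j : ι} : j ∈ fractionalIndices s ↔ s j ∈ Ioo 0 1 := by
  simp [fractionalIndices]

lemma exists_ne_zero_dotProduct_eq_zero {F : Finset ι} (hF : 1 < F.card) (d : ι → ℝ) :
    ∃ v : ι → ℝ, v ≠ 0 ∧ (∀ j, v j ≠ 0 → j ∈ F) ∧ v ⬝ᵥ d = 0 := by
  classical
  obtain ⟨i, hi, k, hk, hik⟩ := Finset.one_lt_card.1 hF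
  by_cases hdi : d i = 0
  · refine ⟨Pi.single i 1, by simp, fun j hj => ?_, by simp [hdi]⟩
    by_contra hjF
    have hji : j ≠ i := fun h => hjF (h ▸ hi)
    simp [hji] at hj
  · refine ⟨Pi.single i (d k) - Pi.single k (d i), fun h => hdi ?_, fun j hj => ?_, ?_⟩
    · simpa [hik.symm] using congrFun h k
    · by_contra hjF
      have hji : j ≠ i := fun h => hjF (h ▸ hi)
      have hjk : j ≠ k := fun h => hjF (h ▸ hk)
      simp [hji, hjk] at hj
    · simp [sub_dotProduct, mul_comm]

lemma eventually_mem_Icc_add_smul {s v : ι → ℝ} (hs : s ∈ Icc 0 1)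
    (hv : ∀ j, v j ≠ 0 → j ∈ fractionalIndices s) :
    ∀ᶠ t : ℝ in 𝓝 0, s + t • v ∈ Icc 0 1 := by
  have hcoord (j : ι) : ∀ᶠ t : ℝ in 𝓝 0, s j + t * v j ∈ Icc 0 1 := by
    by_cases hj : v j = 0
    · exact .of_forall fun t => by simpa [hj] using ⟨hs.1 j, hs.2 j⟩
    · have hcont : ContinuousAt (fun t : ℝ => s j + t * v j) 0 := by fun_prop
      obtain ⟨h0, h1⟩ := mem_fractionalIndices.1 (hv j hj)
      exact hcont.eventually_mem (Icc_mem_nhds (by simpa using h0) (by simpa using h1))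
  filter_upwards [eventually_all.2 hcoord] with t ht
  exact ⟨fun j => (ht j).1, fun j => (ht j).2⟩

variable {L : ∀ j, V →ₗ[R] E j} {s v : ι → ℝ}

lemma RankCondition.submoduleMap (hs : RankCondition L s) (W : Submodule R V) :
    RankCondition (fun j => (L j).submoduleMap W) s := by
  intro U hU
  have hmap (j : ι) : finrank R (U.map ((L j).submoduleMap W))
      = finrank R ((U.map W.subtype).map (L j)) := by
    rw [← Submodule.finrank_map_subtype_eq, ← Submodule.map_comp, ← Submodule.map_comp]
    rfl
  simpa only [hmap, Submodule.finrank_map_subtype_eq] using hs (U.map W.subtype) (hU.map _)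

lemma isCompact_rankPolytope (L : ∀ j, V →ₗ[R] E j) : IsCompact (rankPolytope L) := by
  refine isCompact_Icc.inter_right ?_
  simp only [RankCondition, Set.ofPred_forall]
  exact isClosed_iInter fun W => isClosed_iInter fun _ =>
    isClosed_le continuous_const (by fun_prop)

variable [IsDomain R]

lemma RankCondition.quotientMap [IsNoetherian R V] (hs : RankCondition L s) {W : Submodule R V}
    (hW : (finrank R W : ℝ) = ∑ j, s j * finrank R (W.map (L j))) :
    RankCondition (quotientMap L W) s := by
  intro U _
  let U' := U.comap W.mkQ
  have hWU' : W ≤ U' := W.le_comap_mkQ U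
  have hU : U'.map W.mkQ = U := Submodule.map_comap_eq_of_surjective W.mkQ_surjective U
  have hrank : finrank R U + finrank R W = finrank R U' := by
    rw [← hU, finrank_map_mkQ_add_finrank hWU']
  have hrank_map (j : ι) : finrank R (U.map (BrascampLieb.quotientMap L W j))
      + finrank R (W.map (L j)) = finrank R (U'.map (L j)) := by
    have hmap : U.map (BrascampLieb.quotientMap L W j)
        = (U'.map (L j)).map (W.map (L j)).mkQ := by
      rw [← hU, ← Submodule.map_comp, ← Submodule.map_comp]
      rfl
    rw [hmap, finrank_map_mkQ_add_finrank (Submodule.map_mono hWU')]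
  have h := hs U' (IsNoetherian.noetherian U')
  simp only [← hrank, ← hrank_map, Nat.cast_add, mul_add, Finset.sum_add_distrib] at h
  linarith

lemma IsCritical.of_le_of_finrank_eq [IsNoetherian R V] {W W' : Submodule R V}
    (hW : IsCritical L s W) (hle : W ≤ W') (h : finrank R W' = finrank R W) :
    IsCritical L s W' := by
  have hmap (j : ι) : finrank R (W'.map (L j)) = finrank R (W.map (L j)) :=
    (finrank_map_eq_of_le_of_finrank_eq (L j) hle h.symm).symm
  simpa only [IsCritical, h, hmap] using hW

lemma finrank_le_sum_fractionalIndices (hs : s ∈ rankPolytope L) {W : Submodule R V} (hW : W.FG)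
    (hmap : ∀ j, s j = 1 → W.map (L j) = ⊥) :
    (finrank R W : ℝ) ≤ ∑ j ∈ fractionalIndices s, s j * finrank R W := by
  have : Module.Finite R W := Module.Finite.iff_fg.2 hW
  have hterm (j : ι) (hj : j ∉ fractionalIndices s) : s j * finrank R (W.map (L j)) = 0 := by
    rcases (hs.1.1 j).eq_or_lt with h | h
    · rw [← h, Pi.zero_apply, zero_mul]
    · have hj1 : s j = 1 :=
        (hs.1.2 j).antisymm (not_lt.1 fun h' => hj (mem_fractionalIndices.2 ⟨h, h'⟩))
      rw [hmap j hj1, finrank_bot, Nat.cast_zero, mul_zero]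
  calc (finrank R W : ℝ)
      ≤ ∑ j, s j * finrank R (W.map (L j)) := hs.2 W hW
    _ = ∑ j ∈ fractionalIndices s, s j * finrank R (W.map (L j)) :=
        (Finset.sum_subset (Finset.subset_univ _) fun j _ => hterm j).symm
    _ ≤ ∑ j ∈ fractionalIndices s, s j * finrank R W := by
        gcongr with j
        · exact hs.1.1 j
        · exact Submodule.finrank_map_le (L j) W

lemma iInf_ker_eq_bot_of_card_fractionalIndices_le_one [IsNoetherian R V] [IsTorsionFree R V]
    (hs : s ∈ rankPolytope L) (hcard : (fractionalIndices s).card ≤ 1) :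
    ⨅ j : {j // s j = 1}, LinearMap.ker (L j) = ⊥ := by
  set N : Submodule R V := ⨅ j : {j // s j = 1}, LinearMap.ker (L j)
  by_contra hN
  have hpos : (0 : ℝ) < finrank R N :=
    mod_cast Nat.pos_of_ne_zero (Submodule.finrank_eq_zero.not.2 hN)
  have hle := finrank_le_sum_fractionalIndices hs (IsNoetherian.noetherian N) fun j hj =>
    LinearMap.le_ker_iff_map.1 (iInf_le (fun j : {j // s j = 1} => LinearMap.ker (L j)) ⟨j, hj⟩)
  rcases Nat.le_one_iff_eq_zero_or_eq_one.1 hcard with h | h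
  · rw [Finset.card_eq_zero.1 h, Finset.sum_empty] at hle
    exact hle.not_gt hpos
  · obtain ⟨j, hj⟩ := Finset.card_eq_one.1 h
    rw [hj, Finset.sum_singleton] at hle
    have hsj : s j < 1 :=
      (mem_fractionalIndices.1 (hj.symm ▸ Finset.mem_singleton_self j)).2
    exact hle.not_gt (mul_lt_of_lt_one_left hpos hsj)

lemma sumBound_of_card_fractionalIndices_le_one [IsNoetherian R V] [IsTorsionFree R V]
    (hs : s ∈ rankPolytope L) (hcard : (fractionalIndices s).card ≤ 1) :
    SumBound (fun j => L j) s := by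
  refine SumBound.of_injective hs.1.1 ?_
  have hker := iInf_ker_eq_bot_of_card_fractionalIndices_le_one hs hcard
  rw [← LinearMap.ker_pi, LinearMap.ker_eq_bot] at hker
  exact hker

lemma eventually_rankCondition_add_smul [IsNoetherian R V] (hs : RankCondition L s)
    (hcrit : ∀ W, ¬ IsCritical L s W)
    (htop : v ⬝ᵥ (fun j => (finrank R ((⊤ : Submodule R V).map (L j)) : ℝ)) = 0) :
    ∀ᶠ t : ℝ in 𝓝 0, RankCondition L (s + t • v) := by
  have hranks : ∀ᶠ t : ℝ in 𝓝 0,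
      ∀ d ∈ range fun W : Submodule R V => (finrank R W, fun j => finrank R (W.map (L j))),
        (d.1 : ℝ) ≤ (s + t • v) ⬝ᵥ (fun j => (d.2 j : ℝ)) := by
    refine (eventually_all_finite (finite_range_finrank_map L)).2 ?_
    rintro _ ⟨W, rfl⟩
    have hW := hs W (IsNoetherian.noetherian W)
    simp only [add_dotProduct, smul_dotProduct]
    rcases Nat.eq_zero_or_pos (finrank R W) with hbot | hbot
    · have hmap (j : ι) : finrank R (W.map (L j)) = 0 :=
        Nat.le_zero.1 (hbot ▸ Submodule.finrank_map_le (L j) W)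
      exact .of_forall fun t => by simp [hbot, hmap, dotProduct]
    rcases W.finrank_le.eq_or_lt with htop' | htop'
    · have hmap (j : ι) : finrank R (W.map (L j)) = finrank R ((⊤ : Submodule R V).map (L j)) :=
        finrank_map_eq_of_le_of_finrank_eq (L j) le_top (htop'.trans (finrank_top R V).symm)
      exact .of_forall fun t => by simpa [hmap, htop] using! hW
    · have hlt := hW.lt_of_ne fun h => hcrit W ⟨hbot, htop', h⟩
      have hcont : ContinuousAt (fun t : ℝ => (s ⬝ᵥ fun j => (finrank R (W.map (L j)) : ℝ))
          + t • (v ⬝ᵥ fun j => (finrank R (W.map (L j)) : ℝ))) 0 := by fun_prop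
      refine (hcont.eventually_const_lt ?_).mono fun t => le_of_lt
      simpa using! hlt
  filter_upwards [hranks] with t ht W _
  exact ht _ ⟨W, rfl⟩

/-- Moving from `s` in the direction `v`, stop at the last point of the polytope: if it had no
critical submodule and the same fractional coordinates, then one could move further. -/
lemma exists_add_smul_mem_rankPolytope [IsNoetherian R V] (hs : s ∈ rankPolytope L) (hv0 : v ≠ 0)
    (hv : ∀ j, v j ≠ 0 → j ∈ fractionalIndices s)
    (htop : v ⬝ᵥ (fun j => (finrank R ((⊤ : Submodule R V).map (L j)) : ℝ)) = 0) :
    ∃ t : ℝ, 0 ≤ t ∧ s + t • v ∈ rankPolytope L ∧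
      ((∃ W, IsCritical L (s + t • v) W) ∨
        fractionalIndices (s + t • v) ⊂ fractionalIndices s) := by
  have hemb : IsClosedEmbedding fun t : ℝ => s + t • v :=
    (Homeomorph.addLeft s).isClosedEmbedding.comp (isClosedEmbedding_smul_left hv0)
  obtain ⟨t, ⟨ht0, ht⟩, hmax⟩ :=
    ((hemb.isCompact_preimage (isCompact_rankPolytope L)).inter_left
      (isClosed_Ici (a := (0 : ℝ)))).exists_isGreatest ⟨0, mem_Ici.2 le_rfl, by simpa using hs⟩
  refine ⟨t, ht0, ht, or_iff_not_imp_left.2 fun hcrit => ?_⟩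
  have hsub : fractionalIndices (s + t • v) ⊆ fractionalIndices s := fun j hj => by
    by_cases hvj : v j = 0
    · simpa [mem_fractionalIndices, hvj] using hj
    · exact hv j hvj
  refine hsub.ssubset_of_ne fun heq => ?_
  have hmove : ∀ᶠ u : ℝ in 𝓝 0, (s + t • v) + u • v ∈ rankPolytope L :=
    (eventually_mem_Icc_add_smul ht.1 (heq ▸ hv)).and
      (eventually_rankCondition_add_smul ht.2 (not_exists.1 hcrit) htop)
  obtain ⟨u, hu, hu0⟩ :=
    ((hmove.filter_mono nhdsWithin_le_nhds).and (self_mem_nhdsWithin (s := Ioi 0))).exists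
  rw [add_assoc, ← add_smul] at hu
  exact (lt_add_of_pos_right t hu0).not_ge (hmax ⟨ht0.trans (le_add_of_nonneg_right hu0.le), hu⟩)

lemma sumBound_of_forall_isCritical [IsNoetherian R V] [IsTorsionFree R V]
    (hcrit : ∀ s ∈ rankPolytope L, ∀ W, IsCritical L s W → SumBound (fun j => L j) s)
    (hs : s ∈ rankPolytope L) : SumBound (fun j => L j) s := by
  induction hF : fractionalIndices s using Finset.strongInduction generalizing s with
  | _ F ih =>
  subst hF
  rcases le_or_gt (fractionalIndices s).card 1 with hcard | hcard
  · exact sumBound_of_card_fractionalIndices_le_one hs hcard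
  obtain ⟨v, hv0, hv, htop⟩ := exists_ne_zero_dotProduct_eq_zero hcard
    fun j => (finrank R ((⊤ : Submodule R V).map (L j)) : ℝ)
  let line := AffineMap.lineMap (k := ℝ) s (s + v)
  let good : Set ℝ := line ⁻¹' {s | 0 ≤ s ∧ SumBound (fun j => L j) s}
  have hline (t : ℝ) : line t = s + t • v := by
    simp [line, AffineMap.lineMap_apply, add_comm]
  have hgood (t : ℝ) (ht : s + t • v ∈ rankPolytope L) (h : (∃ W, IsCritical L (s + t • v) W) ∨
      fractionalIndices (s + t • v) ⊂ fractionalIndices s) : t ∈ good := by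
    simp only [good, mem_preimage, hline]
    exact ⟨ht.1.1, h.elim (fun ⟨W, hW⟩ => hcrit _ ht W hW) fun h => ih _ h ht rfl⟩
  obtain ⟨t, ht0, ht, h⟩ := exists_add_smul_mem_rankPolytope hs hv0 hv htop
  obtain ⟨t', ht0', ht', h'⟩ := exists_add_smul_mem_rankPolytope (v := -v) hs
    (neg_ne_zero.2 hv0) (by simpa using hv) (by simp [htop])
  rw [smul_neg, ← neg_smul] at ht' h'
  have hconv : good.OrdConnected :=
    ((convex_setOf_sumBound fun j => L j).affine_preimage line).ordConnected
  have h0 : (0 : ℝ) ∈ good :=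
    hconv.out (hgood _ ht' h') (hgood _ ht h) ⟨neg_nonpos.2 ht0', ht0⟩
  simpa [good, hline] using h0.2

theorem sumBound_of_mem_rankPolytope [IsNoetherian R V] [IsTorsionFree R V]
    (hs : s ∈ rankPolytope L) : SumBound (fun j => L j) s := by
  induction hn : finrank R V using Nat.strong_induction_on generalizing V E s with
  | _ n ih =>
  subst hn
  refine sumBound_of_forall_isCritical (fun s hs W hW => ?_) hs
  obtain ⟨W', hle, hrank, _⟩ := exists_le_finrank_eq_isTorsionFree_quotient W
  obtain ⟨hpos, hlt, heq⟩ := hW.of_le_of_finrank_eq hle hrank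
  refine SumBound.of_submodule_of_quotient (W := W') ?_ ?_
  · exact ih _ hlt ⟨hs.1, hs.2.submoduleMap W'⟩ rfl
  · refine ih _ ?_ ⟨hs.1, hs.2.quotientMap heq⟩ rfl
    have := W'.finrank_quotient_add_finrank
    omega

theorem RankCondition.sumBound [IsNoetherianRing R] [IsTorsionFree R V]
    (hs : RankCondition L s) (h01 : s ∈ Icc 0 1) : SumBound (fun j => L j) s :=
  SumBound.of_forall_fg h01.1 fun W hW => by
    have := isNoetherian_of_fg_of_noetherian W hW
    exact sumBound_of_mem_rankPolytope ⟨h01, hs.submoduleMap W⟩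

end RankPolytope


section UpperBound

variable {ι : Type*} [Fintype ι]

lemma natCast_le_sum_div_iff {p : ι → ℝ≥0∞} (hp : ∀ j, p j ≠ 0) (d : ℕ) (e : ι → ℕ) :
    (d : ℝ≥0∞) ≤ ∑ j, (e j : ℝ≥0∞) / p j ↔ (d : ℝ) ≤ ∑ j, (p j)⁻¹.toReal * e j := by
  have hfin (j : ι) : (e j : ℝ≥0∞) / p j ≠ ∞ :=
    ENNReal.div_ne_top (ENNReal.natCast_ne_top _) (hp j)
  rw [← ENNReal.toReal_le_toReal (ENNReal.natCast_ne_top _)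
    (ENNReal.sum_ne_top.2 fun j _ => hfin j), ENNReal.toReal_sum fun j _ => hfin j]
  simp [div_eq_mul_inv, mul_comm]

lemma exists_enorm_le_mul_rpow {α E : Type*} [MeasurableSpace α] [MeasurableSingletonClass α]
    [NormedAddCommGroup E] {p : ℝ≥0∞} (hp : p ≠ 0) (f : α → E) :
    ∃ (c : ℝ≥0∞) (g : α → ℝ≥0∞), (∀ y, ‖f y‖ₑ ≤ c * g y ^ p⁻¹.toReal) ∧
      c * (∑' y, g y) ^ p⁻¹.toReal = eLpNorm f p Measure.count := by
  rcases eq_or_ne p ∞ with rfl | hp'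
  · refine ⟨eLpNorm f ∞ Measure.count, 0, fun y => ?_, by simp⟩
    have := Measure.ae_count_iff.1 (ENNReal.ae_le_essSup (μ := Measure.count) fun y => ‖f y‖ₑ) y
    simpa [eLpNorm_exponent_top, eLpNormEssSup] using this
  · have hpr : p.toReal ≠ 0 := (ENNReal.toReal_pos hp hp').ne'
    refine ⟨1, fun y => ‖f y‖ₑ ^ p.toReal, fun y => ?_, ?_⟩
    · rw [one_mul, ← ENNReal.rpow_mul, ENNReal.toReal_inv, mul_inv_cancel₀ hpr, ENNReal.rpow_one]
    · rw [one_mul, eLpNorm_eq_lintegral_rpow_enorm_toReal hp hp', lintegral_count,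
        ENNReal.toReal_inv, one_div]

lemma finrank_rat_tensorProduct (A : Type*) [AddCommGroup A] :
    finrank ℚ (ℚ ⊗[ℤ] A) = finrank ℤ A :=
  (TensorProduct.isBaseChange ℤ A ℚ).finrank_eq

variable {G : Type*} [AddCommGroup G] {Gj : ι → Type*} [∀ j, AddCommGroup (Gj j)]
  {σ : ∀ j, G →+ Gj j} {p : ι → ℝ≥0∞}

lemma rankCondition_toIntLinearMap_iff (hp : ∀ j, p j ≠ 0) :
    RankCondition (fun j => (σ j).toIntLinearMap) (fun j => (p j)⁻¹.toReal) ↔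
      ∀ H : AddSubgroup G, H.FG → (finrank ℚ (ℚ ⊗[ℤ] H) : ℝ≥0∞)
        ≤ ∑ j, (finrank ℚ (ℚ ⊗[ℤ] H.map (σ j)) : ℝ≥0∞) / p j := by
  simp only [finrank_rat_tensorProduct, natCast_le_sum_div_iff hp]
  refine AddSubgroup.toIntSubmodule.symm.forall_congr fun W => ?_
  rw [Submodule.fg_iff_addSubgroup_fg]
  rfl

theorem SumBound.holdsBLCount_one [MeasurableSpace G] [MeasurableSingletonClass G]
    [∀ j, MeasurableSpace (Gj j)] [∀ j, MeasurableSingletonClass (Gj j)] (hp : ∀ j, p j ≠ 0)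
    (h : SumBound (fun j => σ j) fun j => (p j)⁻¹.toReal) : HoldsBLCount σ p 1 := by
  intro f _ _
  choose c g hfg hnorm using fun j => exists_enorm_le_mul_rpow (hp j) (f j)
  rw [one_mul, ← Real.enorm_eq_ofReal_abs]
  calc ‖∫ x, ∏ j, f j (σ j x) ∂Measure.count‖ₑ
      ≤ ∑' x, ‖∏ j, f j (σ j x)‖ₑ := by
        rw [← lintegral_count]
        exact enorm_integral_le_lintegral_enorm _
    _ = ∑' x, ∏ j, ‖f j (σ j x)‖ₑ := by simp [enorm_eq_nnnorm, nnnorm_prod]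
    _ ≤ ∑' x, ∏ j, c j * g j (σ j x) ^ (p j)⁻¹.toReal :=
        ENNReal.tsum_le_tsum fun x => Finset.prod_le_prod' fun j _ => hfg j (σ j x)
    _ = (∏ j, c j) * ∑' x, ∏ j, g j (σ j x) ^ (p j)⁻¹.toReal := by
        simp only [Finset.prod_mul_distrib, ENNReal.tsum_mul_left]
    _ ≤ (∏ j, c j) * ∏ j, (∑' y, g j y) ^ (p j)⁻¹.toReal := by
        gcongr
        exact h g
    _ = ∏ j, eLpNorm (f j) (p j) Measure.count := by
        rw [← Finset.prod_mul_distrib]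
        exact Finset.prod_congr rfl fun j _ => hnorm j

end UpperBound

section Growth

/-- The discrete cube `{0, …, N - 1}^κ`, as a finite set of vectors of the lattice `ℤ^κ`. -/
noncomputable def cube (κ : Type*) [Fintype κ] [DecidableEq κ] (N : ℕ) : Finset (κ → ℤ) :=
  Fintype.piFinset fun _ => Finset.Ico 0 (N : ℤ)

lemma card_cube (κ : Type*) [Fintype κ] [DecidableEq κ] (N : ℕ) :
    (cube κ N).card = N ^ Fintype.card κ := by
  simp [cube]

variable {κ : Type*} [Fintype κ] [DecidableEq κ]

lemma exists_forall_mem_cube_abs_le (f : (κ → ℤ) →ₗ[ℤ] ℤ) :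
    ∃ M : ℕ, ∀ N, ∀ x ∈ cube κ N, |f x| ≤ M * N := by
  let e (i : κ) : κ → ℤ := fun k => if i = k then 1 else 0
  refine ⟨∑ i, (f (e i)).natAbs, fun N x hx => ?_⟩
  have hx' (i : κ) : |x i| ≤ N := by
    obtain ⟨h0, h1⟩ := Finset.mem_Ico.1 (Fintype.mem_piFinset.1 hx i)
    exact (abs_of_nonneg h0).trans_le h1.le
  calc |f x| = |∑ i, x i * f (e i)| := congrArg abs (f.pi_apply_eq_sum_univ x)
    _ ≤ ∑ i, |x i| * |f (e i)| := by
        simpa only [abs_mul] using Finset.abs_sum_le_sum_abs (fun i => x i * f (e i)) Finset.univ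
    _ ≤ ∑ i, N * |f (e i)| := by
        gcongr with i
        exact hx' i
    _ = (∑ i, (f (e i)).natAbs : ℕ) * N := by simp [← Finset.mul_sum, mul_comm]

lemma exists_card_image_cube_le_pow {r : ℕ} (f : (κ → ℤ) →ₗ[ℤ] (Fin r → ℤ)) :
    ∃ B : ℕ, ∀ N : ℕ, 1 ≤ N → ((cube κ N).image f).card ≤ B * N ^ r := by
  choose M hM using fun k => exists_forall_mem_cube_abs_le (LinearMap.proj k ∘ₗ f)
  refine ⟨∏ k, (2 * M k + 1), fun N hN => ?_⟩
  calc ((cube κ N).image f).card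
      ≤ (Fintype.piFinset fun k => Finset.Icc (-(M k * N : ℤ)) (M k * N)).card := by
        refine Finset.card_le_card (Finset.image_subset_iff.2 fun x hx => ?_)
        exact Fintype.mem_piFinset.2 fun k => Finset.mem_Icc.2 (abs_le.1 (hM k N x hx))
    _ = ∏ k, (2 * (M k * N) + 1) := by
        rw [Fintype.card_piFinset]
        refine Finset.prod_congr rfl fun k _ => ?_
        rw [Int.card_Icc]
        lia
    _ ≤ ∏ k : Fin r, (2 * M k + 1) * N := by
        gcongr with k
        nlinarith
    _ = (∏ k, (2 * M k + 1)) * N ^ r := by simp [Finset.prod_mul_distrib]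

variable {A : Type*} [AddCommGroup A]

lemma exists_linearMap_finite_ker [Module.Finite ℤ A] :
    ∃ π : A →ₗ[ℤ] (Fin (finrank ℤ A) → ℤ), Finite (LinearMap.ker π) := by
  let T := Submodule.torsion ℤ A
  have hT : finrank ℤ T = 0 := finrank_eq_zero_iff_isTorsion.2 Submodule.torsion_isTorsion
  have hrank : finrank ℤ (A ⧸ T) = finrank ℤ A := by
    simpa [hT] using T.finrank_quotient_add_finrank
  let b := (finBasis ℤ (A ⧸ T)).reindex (finCongr hrank)
  refine ⟨b.equivFun ∘ₗ T.mkQ, ?_⟩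
  rw [LinearMap.ker_comp_of_ker_eq_bot _ b.equivFun.ker, Submodule.ker_mkQ]
  exact finite_of_fg_torsion T Submodule.torsion_isTorsion

lemma card_le_card_ker_mul_card_image {F : Type*} [AddCommGroup F] [DecidableEq F] (π : A →ₗ[ℤ] F)
    [Finite (LinearMap.ker π)] (S : Finset A) :
    S.card ≤ Nat.card (LinearMap.ker π) * (S.image π).card := by
  classical
  refine Finset.card_le_mul_card_image S _ fun y hy => ?_
  obtain ⟨x, -, rfl⟩ := Finset.mem_image.1 hy
  let e : π ⁻¹' {π x} ≃ LinearMap.ker π := π.toAddMonoidHom.fiberEquivKer x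
  rw [← Nat.card_congr e, Nat.card_coe_set_eq, ← Set.ncard_coe_finset]
  refine Set.ncard_le_ncard (fun a ha => ?_) (Finite.of_equiv _ e.symm)
  exact (Finset.mem_filter.1 (Finset.mem_coe.1 ha)).2

lemma exists_card_image_cube_le [DecidableEq A] (f : (κ → ℤ) →ₗ[ℤ] A) :
    ∃ B : ℕ, ∀ N : ℕ, 1 ≤ N →
      ((cube κ N).image f).card ≤ B * N ^ finrank ℤ (LinearMap.range f) := by
  obtain ⟨π, hπ⟩ := exists_linearMap_finite_ker (A := LinearMap.range f)
  obtain ⟨B, hB⟩ := exists_card_image_cube_le_pow (π ∘ₗ f.rangeRestrict)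
  refine ⟨Nat.card (LinearMap.ker π) * B, fun N hN => ?_⟩
  calc ((cube κ N).image f).card
      = ((cube κ N).image f.rangeRestrict).card := by
        rw [← Finset.card_image_of_injective _ (LinearMap.range f).injective_subtype,
          Finset.image_image]
        rfl
    _ ≤ Nat.card (LinearMap.ker π) * ((cube κ N).image (π ∘ₗ f.rangeRestrict)).card := by
        rw [LinearMap.coe_comp, ← Finset.image_image]
        exact card_le_card_ker_mul_card_image π _
    _ ≤ Nat.card (LinearMap.ker π) * (B * N ^ finrank ℤ (LinearMap.range f)) :=
        Nat.mul_le_mul_left _ (hB N hN)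
    _ = _ := (mul_assoc _ _ _).symm

lemma le_of_forall_natCast_rpow_le_mul_rpow {a b K : ℝ}
    (h : ∀ N : ℕ, 1 ≤ N → (N : ℝ) ^ a ≤ K * (N : ℝ) ^ b) :
    a ≤ b := by
  by_contra! hab
  have hlim := (tendsto_rpow_atTop (sub_pos.2 hab)).comp tendsto_natCast_atTop_atTop
  obtain ⟨N, hKN, hN⟩ := ((hlim.eventually_gt_atTop K).and (eventually_ge_atTop 1)).exists
  have hN0 : (0 : ℝ) < N := by exact_mod_cast hN
  rw [Function.comp_apply, Real.rpow_sub hN0, lt_div_iff₀ (by positivity)] at hKN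
  exact (h N hN).not_gt hKN

lemma le_sum_mul_of_forall_pow_le {ι : Type*} [Fintype ι] {C : ℝ≥0∞} (hC : C ≠ ∞) {d : ℕ}
    {B e : ι → ℕ} {s : ι → ℝ} (hs : 0 ≤ s)
    (h : ∀ N : ℕ, 1 ≤ N → (N ^ d : ℝ≥0∞) ≤ C * ∏ j, (B j * N ^ e j : ℝ≥0∞) ^ s j) :
    (d : ℝ) ≤ ∑ j, s j * e j := by
  refine le_of_forall_natCast_rpow_le_mul_rpow (K := C.toReal * ∏ j, (B j : ℝ) ^ s j) fun N hN => ?_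
  have hN0 : (0 : ℝ) < N := by exact_mod_cast hN
  have hfin : C * ∏ j, (B j * N ^ e j : ℝ≥0∞) ^ s j ≠ ∞ :=
    ENNReal.mul_ne_top hC (ENNReal.prod_ne_top fun j _ =>
      ENNReal.rpow_ne_top_of_nonneg (hs j) (by finiteness))
  calc (N : ℝ) ^ (d : ℝ)
      = (N ^ d : ℝ≥0∞).toReal := by simp
    _ ≤ (C * ∏ j, (B j * N ^ e j : ℝ≥0∞) ^ s j).toReal := ENNReal.toReal_mono hfin (h N hN)
    _ = C.toReal * ∏ j, ((B j : ℝ) * (N : ℝ) ^ e j) ^ s j := by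
        simp [ENNReal.toReal_prod, ← ENNReal.toReal_rpow]
    _ = C.toReal * ∏ j, (B j : ℝ) ^ s j * (N : ℝ) ^ (s j * e j) := by
        congr! 2 with j
        rw [Real.mul_rpow (by positivity) (by positivity), ← Real.rpow_natCast,
          ← Real.rpow_mul hN0.le, mul_comm (s j)]
    _ = C.toReal * (∏ j, (B j : ℝ) ^ s j) * (N : ℝ) ^ ∑ j, s j * e j := by
        rw [Finset.prod_mul_distrib, Real.rpow_sum_of_pos hN0, mul_assoc]

end Growth

section LowerBound

lemma injective_of_iInf_ker_eq_bot {ι G : Type*} [AddCommGroup G] {Gj : ι → Type*}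
    [∀ j, AddCommGroup (Gj j)] {σ : ∀ j, G →+ Gj j}
    (hker : (⨅ j, (σ j).ker : AddSubgroup G) = ⊥) :
    Function.Injective fun x j => σ j x := by
  intro x y hxy
  have hmem : x - y ∈ (⨅ j, (σ j).ker : AddSubgroup G) := by
    simpa [AddSubgroup.mem_iInf, sub_eq_zero] using congrFun hxy
  rwa [hker, AddSubgroup.mem_bot, sub_eq_zero] at hmem

lemma eLpNorm_indicator_one_count_le {α : Type*} [MeasurableSpace α] [MeasurableSingletonClass α]
    (S : Finset α) (p : ℝ≥0∞) :
    eLpNorm ((S : Set α).indicator fun _ => (1 : ℝ)) p Measure.count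
      ≤ (S.card : ℝ≥0∞) ^ p⁻¹.toReal := by
  refine (eLpNorm_indicator_const_le _ _).trans_eq ?_
  rw [Measure.count_apply_finset, enorm_one, one_mul, ENNReal.toReal_inv, one_div]

variable {ι : Type*} [Fintype ι] {G : Type*} [AddCommGroup G] [MeasurableSpace G]
  [MeasurableSingletonClass G] {Gj : ι → Type*} [∀ j, AddCommGroup (Gj j)]
  [∀ j, MeasurableSpace (Gj j)] [∀ j, MeasurableSingletonClass (Gj j)]
  {σ : ∀ j, G →+ Gj j} {p : ι → ℝ≥0∞} {C : ℝ≥0∞}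

lemma card_le_of_holdsBLCount [∀ j, DecidableEq (Gj j)] (hC : HoldsBLCount σ p C)
    (hσ : Function.Injective fun x j => σ j x) (T : Finset G) :
    (T.card : ℝ≥0∞) ≤ C * ∏ j, ((T.image (σ j)).card : ℝ≥0∞) ^ (p j)⁻¹.toReal := by
  classical
  let f (j : ι) : Gj j → ℝ := (T.image (σ j) : Set (Gj j)).indicator fun _ => 1
  let S : Set G := {x | ∀ j, σ j x ∈ T.image (σ j)}
  have hTS : (T : Set G) ⊆ S := fun x hx j => Finset.mem_image_of_mem _ hx
  have hS : S.Finite := by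
    refine ((Fintype.piFinset fun j => T.image (σ j)).finite_toSet.preimage hσ.injOn).subset ?_
    exact fun x hx => Finset.mem_coe.2 (Fintype.mem_piFinset.2 hx)
  have hSfin : (Measure.count : Measure G) S ≠ ∞ := (Measure.count_apply_lt_top.2 hS).ne
  have hprod : (fun x => ∏ j, f j (σ j x)) = S.indicator fun _ => (1 : ℝ) := by
    funext x
    simp [f, S, Set.indicator_apply, Finset.prod_ite_zero]
  have hint : Integrable (fun x => ∏ j, f j (σ j x)) (Measure.count : Measure G) := by
    rw [hprod]
    exact (integrable_indicator_iff hS.measurableSet).2 (integrableOn_const hSfin)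
  calc (T.card : ℝ≥0∞)
      ≤ Measure.count S := by
        rw [← Measure.count_apply_finset]
        exact measure_mono hTS
    _ = ENNReal.ofReal |∫ x, ∏ j, f j (σ j x) ∂Measure.count| := by
        rw [hprod, integral_indicator_const _ hS.measurableSet, smul_eq_mul, mul_one,
          abs_of_nonneg measureReal_nonneg, ofReal_measureReal hSfin]
    _ ≤ C * ∏ j, eLpNorm (f j) (p j) Measure.count :=
        hC f (fun j => (T.image (σ j)).finite_toSet.subset Set.support_indicator_subset) hint
    _ ≤ C * ∏ j, ((T.image (σ j)).card : ℝ≥0∞) ^ (p j)⁻¹.toReal := by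
        gcongr with j
        exact eLpNorm_indicator_one_count_le _ _

lemma one_le_of_holdsBLCount (hC : HoldsBLCount σ p C) (hσ : Function.Injective fun x j => σ j x) :
    1 ≤ C := by
  classical
  simpa using card_le_of_holdsBLCount hC hσ {0}

/-- A free subgroup of `W` of full rank contains cubes of `N ^ finrank ℤ W` points, whose image in
`Gj j` has `O(N ^ finrank ℤ (σ j W))` points. -/
theorem rankCondition_of_holdsBLCount (hC : HoldsBLCount σ p C)
    (hσ : Function.Injective fun x j => σ j x) (hCtop : C ≠ ∞) :
    RankCondition (fun j => (σ j).toIntLinearMap) fun j => (p j)⁻¹.toReal := by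
  classical
  intro W hW
  have := Module.Finite.iff_fg.2 hW
  obtain ⟨v, hv⟩ := exists_linearIndependent_of_le_finrank (le_refl (finrank ℤ W))
  let f : (Fin (finrank ℤ W) → ℤ) →ₗ[ℤ] G := W.subtype ∘ₗ Fintype.linearCombination ℤ v
  have hf : Function.Injective f := W.injective_subtype.comp hv.fintypeLinearCombination_injective
  choose B hB using fun j => exists_card_image_cube_le ((σ j).toIntLinearMap ∘ₗ f)
  have hrank (j : ι) : finrank ℤ (LinearMap.range ((σ j).toIntLinearMap ∘ₗ f))
      ≤ finrank ℤ (W.map (σ j).toIntLinearMap) := by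
    refine Submodule.finrank_mono ?_
    rw [LinearMap.range_comp]
    refine Submodule.map_mono ?_
    exact (LinearMap.range_comp_le_range _ _).trans_eq W.range_subtype
  have hs : 0 ≤ fun j => (p j)⁻¹.toReal := fun j => ENNReal.toReal_nonneg
  refine (le_sum_mul_of_forall_pow_le (B := B) hCtop hs fun N hN => ?_).trans
    (Finset.sum_le_sum fun j _ =>
      mul_le_mul_of_nonneg_left (Nat.cast_le.2 (hrank j)) (hs j))
  have hcard : ((cube _ N).image f).card = N ^ finrank ℤ W := by
    rw [Finset.card_image_of_injective _ hf, card_cube, Fintype.card_fin]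
  have h := card_le_of_holdsBLCount hC hσ ((cube _ N).image f)
  rw [hcard, Nat.cast_pow] at h
  refine h.trans ?_
  gcongr with j
  rw [Finset.image_image]
  exact_mod_cast hB j N hN

end LowerBound

end BrascampLieb

open BrascampLieb in
theorem blConst_discrete_torsionFree_general
    {ι : Type*} [Fintype ι]
    {G : Type*} [AddCommGroup G] [MeasurableSpace G] [MeasurableSingletonClass G]
    {Gj : ι → Type*} [∀ j, AddCommGroup (Gj j)] [∀ j, MeasurableSpace (Gj j)]
    [∀ j, MeasurableSingletonClass (Gj j)]
    (σ : ∀ j, G →+ Gj j) (hker : (⨅ j, (σ j).ker : AddSubgroup G) = ⊥)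
    (p : ι → ℝ≥0∞) (hp : ∀ j, 1 ≤ p j) :
    (IsAddTorsionFree G →
      (∀ H : AddSubgroup G, H.FG →
        (Module.finrank ℚ (ℚ ⊗[ℤ] ↥H) : ℝ≥0∞)
          ≤ ∑ j, (Module.finrank ℚ (ℚ ⊗[ℤ] ↥(H.map (σ j))) : ℝ≥0∞) / p j) →
      blConstCount σ p = 1) ∧
    ((∃ H : AddSubgroup G, H.FG ∧
        ¬ (Module.finrank ℚ (ℚ ⊗[ℤ] ↥H) : ℝ≥0∞)
          ≤ ∑ j, (Module.finrank ℚ (ℚ ⊗[ℤ] ↥(H.map (σ j))) : ℝ≥0∞) / p j) →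
      blConstCount σ p = ∞) := by
  have hσ := injective_of_iInf_ker_eq_bot hker
  have hp0 (j : ι) : p j ≠ 0 := (zero_lt_one.trans_le (hp j)).ne'
  have hp01 : (fun j => (p j)⁻¹.toReal) ∈ Set.Icc 0 1 :=
    ⟨fun j => ENNReal.toReal_nonneg,
      fun j => ENNReal.toReal_mono one_ne_top (ENNReal.inv_le_one.2 (hp j))⟩
  rw [blConstCount]
  refine ⟨fun _ hrank => le_antisymm (sInf_le ?_) (le_sInf fun C hC => ?_),
    fun ⟨H, hH, hrank⟩ => sInf_eq_top.2 fun C hC => ?_⟩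
  · exact (((rankCondition_toIntLinearMap_iff hp0).2 hrank).sumBound hp01).holdsBLCount_one hp0
  · exact one_le_of_holdsBLCount hC hσ
  · by_contra hCtop
    have hcond := rankCondition_of_holdsBLCount hC hσ hCtop
    exact hrank ((rankCondition_toIntLinearMap_iff hp0).1 hcond H hH)

/-- Let `G` be a discrete torsion-free abelian group, `σⱼ : G → Gⱼ` surjective
homomorphisms onto discrete abelian groups with trivial common kernel, all groups carrying
counting measure and `pⱼ ∈ [1,∞]`. Write `γ(A) = dim_ℚ (ℚ ⊗_ℤ A)` for the torsion-free rank.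
If `γ(H) ≤ Σⱼ γ(σⱼ(H))/pⱼ` for every finitely generated subgroup `H ≤ G`, then the optimal
Brascamp–Lieb constant is `1`; if this rank condition fails for some finitely generated
subgroup, the optimal constant is `∞`. -/
theorem blConst_discrete_torsionFree
    {ι : Type*} [Fintype ι]
    {G : Type*} [AddCommGroup G] [MeasurableSpace G] [MeasurableSingletonClass G]
    {Gj : ι → Type*} [∀ j, AddCommGroup (Gj j)] [∀ j, MeasurableSpace (Gj j)]
    [∀ j, MeasurableSingletonClass (Gj j)]
    (hTF : ∀ x : G, x ≠ 0 → ¬ IsOfFinAddOrder x)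
    (σ : ∀ j, G →+ Gj j) (hsurj : ∀ j, Function.Surjective (σ j))
    (hker : (⨅ j, (σ j).ker : AddSubgroup G) = ⊥)
    (p : ι → ℝ≥0∞) (hp : ∀ j, 1 ≤ p j) :
    ((∀ H : AddSubgroup G, H.FG →
        (Module.finrank ℚ (ℚ ⊗[ℤ] ↥H) : ℝ≥0∞)
          ≤ ∑ j, (Module.finrank ℚ (ℚ ⊗[ℤ] ↥(H.map (σ j))) : ℝ≥0∞) / p j) →
      blConstCount σ p = 1) ∧
    ((∃ H : AddSubgroup G, H.FG ∧
        ¬ (Module.finrank ℚ (ℚ ⊗[ℤ] ↥H) : ℝ≥0∞)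
          ≤ ∑ j, (Module.finrank ℚ (ℚ ⊗[ℤ] ↥(H.map (σ j))) : ℝ≥0∞) / p j) →
      blConstCount σ p = ∞) := by
  have h := blConst_discrete_torsionFree_general σ hker p hp
  exact ⟨h.1 (isAddTorsionFree_iff_not_isOfFinAddOrder.2 fun x hx => hTF x hx), h.2⟩
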